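/- Let f : V → ℂ, let v ∈ V_+ (so v has q_+ + 1 neighbors), and let n ≥ 1. Then M_2(M_{2n} f)(v) = (1/((q_+val+1)·q_-))·( M_{2n−2} f(v) + (q_- − 1)·M_{2n} f(v) + q_+·q_-·M_{2n+2} f(v) ), where q_+val = q_+, i.e. M_2(M_{2n} f)(v) = (1/((q_++1)q_-))·( M_{2n−2} f(v) + (q_-−1)·M_{2n} f(v) + q_+ q_-·M_{2n+2} f(v) ). -/

import Mathlib

open scoped BigOperators ComplexOrder

/-- A semi-homogeneous tree `T_{q_+,q_-}`: a connected acyclic simple graph with a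
parity function `eps` (true = `+`, false = `−`) that flips across edges, in which every
vertex of parity `+` has exactly `qp + 1` neighbors and every vertex of parity `−` has
exactly `qm + 1` neighbors.  Spheres are finite (this follows from local finiteness
and connectedness, and is recorded as a field for convenience). -/
structure SemiHomTree (qp qm : ℕ) (V : Type) where
  G : SimpleGraph V
  connected : G.Connected
  acyclic : G.IsAcyclic
  eps : V → Bool
  adj_parity : ∀ ⦃v w : V⦄, G.Adj v w → eps w = !eps v
  nbr_finite : ∀ v : V, {w : V | G.Adj v w}.Finite
  degree_plus : ∀ v : V, eps v = true → {w : V | G.Adj v w}.ncard = qp + 1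
  degree_minus : ∀ v : V, eps v = false → {w : V | G.Adj v w}.ncard = qm + 1
  sphere_finite : ∀ (v : V) (n : ℕ), {w : V | G.dist v w = n}.Finite

/-- The averaging operator `M_n`: average of `f` over the sphere of radius `n` around `v`. -/
noncomputable def Mop {qp qm : ℕ} {V : Type} (T : SemiHomTree qp qm V)
    (n : ℕ) (f : V → ℂ) (v : V) : ℂ :=
  (({w : V | T.G.dist v w = n}.ncard : ℂ))⁻¹ * ∑ᶠ w ∈ {w : V | T.G.dist v w = n}, f w

/-- The Laplace operator `μ₁`: the average of `f` over the neighbors of `v`. -/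
noncomputable def lap {qp qm : ℕ} {V : Type} (T : SemiHomTree qp qm V)
    (f : V → ℂ) (v : V) : ℂ :=
  (((if T.eps v then qp else qm : ℕ) : ℂ) + 1)⁻¹ * ∑ᶠ w ∈ {w : V | T.G.Adj v w}, f w

/-! Write `q` and `q'` for the branching numbers at the parity of `v` and at the opposite parity.
Simple random walk on a tree moves away from or towards any given vertex, so
`M₁ M_{r+1} f v` only involves the spheres of radius `r` and `r + 2` around `v`. Double counting
paths of length one gives `(q' + 1) M₁ M_{r+1} = M_r + q' M_{r+2}` at `v`, with no exception at
`r = 0`. Applied to `M₁ M₁` and to `M₁ M₁ M_{r+2}`, where the neighbours of `v` exchange the roles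
of `q` and `q'`, this expresses `M₂ M_{r+2}` through `M_r`, `M_{r+2}` and `M_{r+4}`. -/

section Tree

open Finset

variable {V : Type*} {G : SimpleGraph V}

theorem existsUnique_adj_dist_eq (hG : G.IsTree) {v w : V} {r : ℕ} (h : G.dist w v = r + 1) :
    ∃! u, G.Adj v u ∧ G.dist w u = r := by
  obtain ⟨p, hp, hlen⟩ := hG.connected.exists_path_of_dist v w
  rw [SimpleGraph.dist_comm, h] at hlen
  have hnil : ¬p.Nil := by
    rw [SimpleGraph.Walk.not_nil_iff_lt_length]
    omega
  have htail : G.dist w p.snd ≤ r := by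
    have := SimpleGraph.dist_le p.tail
    rw [SimpleGraph.dist_comm]
    have := SimpleGraph.Walk.length_tail_add_one hnil
    omega
  refine ⟨p.snd, ⟨p.adj_snd hnil, ?_⟩, ?_⟩
  · have := hG.dist_eq_dist_add_one_of_adj w (p.adj_snd hnil)
    omega
  · rintro u ⟨hadj, hu⟩
    obtain ⟨p', hp'⟩ := hG.connected.exists_walk_length_eq_dist u w
    have hpath : (SimpleGraph.Walk.cons hadj p').IsPath := by
      refine SimpleGraph.Walk.isPath_of_length_eq_dist _ ?_
      rw [SimpleGraph.Walk.length_cons, hp', G.dist_comm (u := u), G.dist_comm (u := v), hu, h]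
    have heq := (hG.isAcyclic.subsingleton_path v w).elim ⟨_, hpath⟩ ⟨p, hp⟩
    simpa using congrArg (fun p : G.Path v w ↦ p.1.snd) heq

/-- A choice of finiteness witnesses for all spheres of a graph, in the style of
`SimpleGraph.LocallyFinite`. -/
abbrev FiniteSpheres (G : SimpleGraph V) : Type _ :=
  ∀ (v : V) (n : ℕ), Fintype {w : V | G.dist v w = n}

/-- The sphere of radius `n` around `v`. For `n = 1` it is the set of neighbours of `v`, and its
cardinality serves as the degree of `v`. -/
def distSphere (G : SimpleGraph V) [FiniteSpheres G] (v : V) (n : ℕ) : Finset V :=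
  {w : V | G.dist v w = n}.toFinset

/-- The number of neighbours of `v` that are farther than `v` from a given vertex at distance `r`
from `v`, when `G` is a tree: all of them for `r = 0`, and all but one otherwise. -/
def forwardDegree (G : SimpleGraph V) [FiniteSpheres G] (v : V) (r : ℕ) : ℕ :=
  #(distSphere G v 1) - if r = 0 then 0 else 1

variable [FiniteSpheres G]

@[simp]
theorem mem_distSphere {v w : V} {n : ℕ} : w ∈ distSphere G v n ↔ G.dist v w = n := by
  simp [distSphere]

theorem mem_distSphere_one {v w : V} : w ∈ distSphere G v 1 ↔ G.Adj v w := by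
  rw [mem_distSphere, SimpleGraph.dist_eq_one_iff_adj]

theorem distSphere_zero (hG : G.Connected) (v : V) : distSphere G v 0 = {v} := by
  ext w
  rw [mem_distSphere, hG.dist_eq_zero_iff, mem_singleton, eq_comm]

theorem card_filter_dist_eq_one (hG : G.IsTree) {v w : V} {r : ℕ} (h : G.dist w v = r + 1) :
    #{u ∈ distSphere G v 1 | G.dist w u = r} = 1 := by
  rw [card_eq_one_iff_existsUnique]
  simpa only [mem_filter, mem_distSphere_one] using existsUnique_adj_dist_eq hG h

theorem card_filter_dist_eq_forwardDegree (hG : G.IsTree) {v w : V} {r : ℕ}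
    (h : G.dist w v = r) :
    #{u ∈ distSphere G v 1 | G.dist w u = r + 1} = forwardDegree G v r := by
  have hcases : ∀ u ∈ distSphere G v 1, G.dist w v = G.dist w u + 1 ∨ G.dist w u = G.dist w v + 1 :=
    fun u hu ↦ hG.dist_eq_dist_add_one_of_adj w (mem_distSphere_one.1 hu)
  rcases r with _ | r
  · rw [forwardDegree, if_pos rfl, Nat.sub_zero, filter_true_of_mem]
    intro u hu
    have := hcases u hu
    omega
  · have hnot : {u ∈ distSphere G v 1 | ¬G.dist w u = r} =
        {u ∈ distSphere G v 1 | G.dist w u = r + 1 + 1} := by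
      refine filter_congr fun u hu ↦ ?_
      have := hcases u hu
      omega
    have hsplit := card_filter_add_card_filter_not (s := distSphere G v 1) (G.dist w · = r)
    rw [card_filter_dist_eq_one hG h, hnot] at hsplit
    rw [forwardDegree, if_neg r.succ_ne_zero, ← hsplit, Nat.add_sub_cancel_left]

theorem sum_sum_distSphere_succ {M : Type*} [AddCommMonoid M] (hG : G.IsTree) (f : V → M) (v : V)
    (r : ℕ) :
    ∑ u ∈ distSphere G v 1, ∑ w ∈ distSphere G u (r + 1), f w =
      ∑ w ∈ distSphere G v (r + 2), f w +
        forwardDegree G v r • ∑ w ∈ distSphere G v r, f w := by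
  classical
  have hdisj : Disjoint (distSphere G v (r + 2)) (distSphere G v r) := by
    rw [disjoint_left]
    intro w h₁ h₂
    rw [mem_distSphere] at h₁ h₂
    omega
  have hswap (u w : V) : u ∈ distSphere G v 1 ∧ w ∈ distSphere G u (r + 1) ↔
      u ∈ {u ∈ distSphere G v 1 | G.dist w u = r + 1} ∧
        w ∈ distSphere G v (r + 2) ∪ distSphere G v r := by
    rw [mem_filter, mem_union, mem_distSphere_one, mem_distSphere, mem_distSphere, mem_distSphere,
      G.dist_comm (u := u), G.dist_comm (u := v)]
    constructor
    · rintro ⟨hadj, hu⟩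
      have := hG.dist_eq_dist_add_one_of_adj w hadj
      exact ⟨⟨hadj, hu⟩, by omega⟩
    · exact fun h ↦ h.1
  rw [sum_comm' hswap, sum_union hdisj, smul_sum]
  congr 1
  · refine sum_congr rfl fun w hw ↦ ?_
    rw [mem_distSphere, G.dist_comm] at hw
    rw [sum_const, card_filter_dist_eq_one hG hw, one_smul]
  · refine sum_congr rfl fun w hw ↦ ?_
    rw [mem_distSphere, G.dist_comm] at hw
    rw [sum_const, card_filter_dist_eq_forwardDegree hG hw]

theorem sum_card_distSphere_succ (hG : G.IsTree) (v : V) (r : ℕ) :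
    ∑ u ∈ distSphere G v 1, #(distSphere G u (r + 1)) =
      #(distSphere G v (r + 2)) + forwardDegree G v r * #(distSphere G v r) := by
  simp only [card_eq_sum_ones, ← smul_eq_mul]
  exact sum_sum_distSphere_succ hG (fun _ ↦ 1) v r

theorem card_distSphere_succ (hG : G.IsTree) {v : V} {r d : ℕ}
    (hd : ∀ w ∈ distSphere G v r, forwardDegree G w r = d) :
    #(distSphere G v (r + 1)) = #(distSphere G v r) * d := by
  classical
  have hchildren : ∀ w ∈ distSphere G v r,
      #((distSphere G v (r + 1)).bipartiteAbove G.Adj w) = d := by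
    intro w hw
    rw [← hd w hw, ← card_filter_dist_eq_forwardDegree hG (mem_distSphere.1 hw)]
    congr 1
    ext x
    simp only [mem_bipartiteAbove, mem_filter, mem_distSphere, SimpleGraph.dist_eq_one_iff_adj,
      and_comm]
  have hparent : ∀ x ∈ distSphere G v (r + 1),
      #((distSphere G v r).bipartiteBelow G.Adj x) = 1 := by
    intro x hx
    rw [← card_filter_dist_eq_one hG (mem_distSphere.1 hx)]
    congr 1
    ext w
    simp only [mem_bipartiteBelow, mem_filter, mem_distSphere, SimpleGraph.dist_eq_one_iff_adj,
      and_comm, G.adj_comm]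
  rw [card_mul_eq_card_mul G.Adj hchildren hparent, mul_one]

end Tree

namespace SemiHomTree

open Finset

variable {qp qm : ℕ} {V : Type} (T : SemiHomTree qp qm V)

theorem isTree : T.G.IsTree :=
  ⟨T.connected, T.acyclic⟩

noncomputable instance : FiniteSpheres T.G :=
  fun v n ↦ (T.sphere_finite v n).fintype

/-- The branching number attached to a parity: a vertex of this parity has one neighbour more. -/
def branching (qp qm : ℕ) (parity : Bool) : ℕ :=
  bif parity then qp else qm

theorem branching_pos (hqp : 0 < qp) (hqm : 0 < qm) (parity : Bool) :
    0 < branching qp qm parity := by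
  cases parity <;> assumption

theorem card_distSphere_one (v : V) : #(distSphere T.G v 1) = branching qp qm (T.eps v) + 1 := by
  have hcoe : (distSphere T.G v 1 : Set V) = {w | T.G.Adj v w} := by
    ext w
    exact mem_distSphere_one
  rw [← Set.ncard_coe_finset, hcoe]
  cases hv : T.eps v
  · exact T.degree_minus v hv
  · exact T.degree_plus v hv

theorem forwardDegree_zero (v : V) :
    forwardDegree T.G v 0 = branching qp qm (T.eps v) + 1 :=
  T.card_distSphere_one v

theorem forwardDegree_succ (v : V) (r : ℕ) :
    forwardDegree T.G v (r + 1) = branching qp qm (T.eps v) := by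
  rw [forwardDegree, T.card_distSphere_one, if_neg r.succ_ne_zero, Nat.add_sub_cancel]

theorem forwardDegree_congr {v w : V} (h : T.eps v = T.eps w) (r : ℕ) :
    forwardDegree T.G v r = forwardDegree T.G w r := by
  rw [forwardDegree, forwardDegree, T.card_distSphere_one, T.card_distSphere_one, h]

theorem eps_eq_iff_even_length {v w : V} (p : T.G.Walk v w) :
    T.eps v = T.eps w ↔ Even p.length := by
  induction p with
  | nil => simp
  | cons hadj p ih =>
    rw [SimpleGraph.Walk.length_cons, Nat.even_add_one, ← ih, T.adj_parity hadj]
    grind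

theorem eps_eq_iff_even_dist (v w : V) : T.eps v = T.eps w ↔ Even (T.G.dist v w) := by
  obtain ⟨p, hp⟩ := T.connected.exists_walk_length_eq_dist v w
  rw [← hp, T.eps_eq_iff_even_length]

theorem card_distSphere_add_two (v : V) (r : ℕ) :
    #(distSphere T.G v (r + 2)) =
      branching qp qm (!T.eps v) * (forwardDegree T.G v r * #(distSphere T.G v r)) := by
  have hsame {n : ℕ} (hn : Even n) : ∀ w ∈ distSphere T.G v n, T.eps w = T.eps v := by
    intro w hw
    rw [eq_comm, T.eps_eq_iff_even_dist, mem_distSphere.1 hw]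
    exact hn
  have hopp {n : ℕ} (hn : ¬Even n) : ∀ w ∈ distSphere T.G v n, T.eps w = !T.eps v := by
    intro w hw
    rw [Bool.eq_not, ne_comm, ne_eq, T.eps_eq_iff_even_dist, mem_distSphere.1 hw]
    exact hn
  by_cases hr : Even r
  · rw [card_distSphere_succ T.isTree (d := branching qp qm (!T.eps v)),
      card_distSphere_succ T.isTree (d := forwardDegree T.G v r)]
    · ring
    · exact fun w hw ↦ T.forwardDegree_congr (hsame hr w hw) r
    · intro w hw
      rw [T.forwardDegree_succ, hopp (by simpa [Nat.even_add_one] using hr) w hw]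
  · obtain ⟨k, rfl⟩ : ∃ k, r = k + 1 := Nat.exists_eq_succ_of_ne_zero (by rintro rfl; simp at hr)
    rw [card_distSphere_succ T.isTree (d := branching qp qm (T.eps v)),
      card_distSphere_succ T.isTree (d := branching qp qm (!T.eps v)), T.forwardDegree_succ]
    · ring
    · intro w hw
      rw [T.forwardDegree_succ, hopp hr w hw]
    · intro w hw
      rw [T.forwardDegree_succ, hsame (Nat.even_add_one.2 hr) w hw]

theorem card_distSphere_congr {v w : V} (h : T.eps v = T.eps w) (r : ℕ) :
    #(distSphere T.G v r) = #(distSphere T.G w r) := by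
  induction r using Nat.twoStepInduction with
  | zero => simp only [distSphere_zero T.connected, card_singleton]
  | one => rw [T.card_distSphere_one, T.card_distSphere_one, h]
  | more r ih _ =>
    rw [T.card_distSphere_add_two, T.card_distSphere_add_two, h, T.forwardDegree_congr h, ih]

theorem forwardDegree_pos (hqp : 0 < qp) (hqm : 0 < qm) (v : V) (r : ℕ) :
    0 < forwardDegree T.G v r := by
  cases r with
  | zero => rw [T.forwardDegree_zero]; exact Nat.succ_pos _
  | succ r => rw [T.forwardDegree_succ]; exact branching_pos hqp hqm _

theorem card_distSphere_pos (hqp : 0 < qp) (hqm : 0 < qm) (v : V) (r : ℕ) :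
    0 < #(distSphere T.G v r) := by
  induction r using Nat.twoStepInduction with
  | zero => simp [distSphere_zero T.connected]
  | one => rw [T.card_distSphere_one]; exact Nat.succ_pos _
  | more r ih _ =>
    rw [T.card_distSphere_add_two]
    exact Nat.mul_pos (branching_pos hqp hqm _)
      (Nat.mul_pos (T.forwardDegree_pos hqp hqm v r) ih)

theorem card_distSphere_one_mul_of_adj {v u : V} (hadj : T.G.Adj v u) (r : ℕ) :
    #(distSphere T.G v 1) * #(distSphere T.G u (r + 1)) =
      (branching qp qm (!T.eps v) + 1) * (forwardDegree T.G v r * #(distSphere T.G v r)) := by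
  have hconst : ∀ u' ∈ distSphere T.G v 1,
      #(distSphere T.G u' (r + 1)) = #(distSphere T.G u (r + 1)) := by
    intro u' hu'
    refine T.card_distSphere_congr ?_ _
    rw [T.adj_parity (mem_distSphere_one.1 hu'), T.adj_parity hadj]
  have hsum := sum_card_distSphere_succ T.isTree v r
  rw [sum_const_nat hconst, T.card_distSphere_add_two] at hsum
  rw [hsum, Nat.succ_mul]

theorem Mop_eq_sum (n : ℕ) (f : V → ℂ) (v : V) :
    Mop T n f v = (#(distSphere T.G v n) : ℂ)⁻¹ * ∑ w ∈ distSphere T.G v n, f w := by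
  have hcoe : {w : V | T.G.dist v w = n} = distSphere T.G v n := by
    ext w
    exact mem_distSphere.symm
  rw [Mop, hcoe, Set.ncard_coe_finset, finsum_mem_coe_finset]

theorem Mop_zero (f : V → ℂ) (v : V) : Mop T 0 f v = f v := by
  simp [Mop_eq_sum, distSphere_zero T.connected]

theorem Mop_congr {n : ℕ} {f g : V → ℂ} {v : V} (h : ∀ w, T.G.dist v w = n → f w = g w) :
    Mop T n f v = Mop T n g v := by
  rw [Mop_eq_sum, Mop_eq_sum, sum_congr rfl fun w hw ↦ h w (mem_distSphere.1 hw)]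

theorem Mop_add (n : ℕ) (f g : V → ℂ) (v : V) :
    Mop T n (fun w ↦ f w + g w) v = Mop T n f v + Mop T n g v := by
  simp only [Mop_eq_sum, sum_add_distrib, mul_add]

theorem Mop_const_mul (n : ℕ) (c : ℂ) (f : V → ℂ) (v : V) :
    Mop T n (fun w ↦ c * f w) v = c * Mop T n f v := by
  simp only [Mop_eq_sum, ← mul_sum, mul_left_comm]

theorem Mop_one_Mop_succ (hqp : 0 < qp) (hqm : 0 < qm) (f : V → ℂ) (v : V) (r : ℕ) :
    ((branching qp qm (!T.eps v) : ℂ) + 1) * Mop T 1 (Mop T (r + 1) f) v =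
      Mop T r f v + branching qp qm (!T.eps v) * Mop T (r + 2) f v := by
  set q : ℂ := (branching qp qm (!T.eps v) : ℂ) with hq
  set a : ℂ := (forwardDegree T.G v r : ℂ) with ha
  set N : ℂ := (#(distSphere T.G v r) : ℂ) with hN
  set D : ℂ := (#(distSphere T.G v 1) : ℂ) with hD
  have hq0 : q ≠ 0 := Nat.cast_ne_zero.2 (branching_pos hqp hqm _).ne'
  have hq1 : q + 1 ≠ 0 := Nat.cast_add_one_ne_zero _
  have ha0 : a ≠ 0 := Nat.cast_ne_zero.2 (T.forwardDegree_pos hqp hqm v r).ne'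
  have hN0 : N ≠ 0 := Nat.cast_ne_zero.2 (T.card_distSphere_pos hqp hqm v r).ne'
  have hD0 : D ≠ 0 := Nat.cast_ne_zero.2 (T.card_distSphere_pos hqp hqm v 1).ne'
  have hneighbor : ∀ u, T.G.dist v u = 1 →
      Mop T (r + 1) f u = D / ((q + 1) * (a * N)) * ∑ w ∈ distSphere T.G u (r + 1), f w := by
    intro u hu
    have hcard : D * #(distSphere T.G u (r + 1)) = (q + 1) * (a * N) := by
      rw [hD, hq, ha, hN]
      exact_mod_cast T.card_distSphere_one_mul_of_adj (SimpleGraph.dist_eq_one_iff_adj.1 hu) r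
    rw [Mop_eq_sum, ← hcard, div_mul_cancel_left₀ hD0]
  have hcard : (#(distSphere T.G v (r + 2)) : ℂ) = q * (a * N) := by
    rw [hq, ha, hN]
    exact_mod_cast T.card_distSphere_add_two v r
  rw [T.Mop_congr hneighbor, Mop_const_mul, Mop_eq_sum, sum_sum_distSphere_succ T.isTree,
    Mop_eq_sum, Mop_eq_sum, hcard, nsmul_eq_mul, ← hD, ← ha, ← hN]
  field_simp
  ring

end SemiHomTree

open SemiHomTree in
theorem stmt_9_general {qp qm : ℕ} (hqp : 0 < qp) (hqm : 0 < qm) {V : Type}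
    (T : SemiHomTree qp qm V) (f : V → ℂ) (v : V) (r : ℕ) :
    Mop T 2 (Mop T (r + 2) f) v =
      (((branching qp qm (T.eps v) : ℂ) + 1) * (branching qp qm (!T.eps v) : ℂ))⁻¹ *
        (Mop T r f v + ((branching qp qm (!T.eps v) : ℂ) - 1) * Mop T (r + 2) f v +
          (branching qp qm (T.eps v) : ℂ) * (branching qp qm (!T.eps v) : ℂ) *
            Mop T (r + 4) f v) := by
  set q : ℂ := (branching qp qm (T.eps v) : ℂ)
  set q' : ℂ := (branching qp qm (!T.eps v) : ℂ)
  have hq1 : q + 1 ≠ 0 := Nat.cast_add_one_ne_zero _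
  have hq'0 : q' ≠ 0 := Nat.cast_ne_zero.2 (branching_pos hqp hqm _).ne'
  have hM₁M₁ : (q' + 1) * Mop T 1 (Mop T 1 (Mop T (r + 2) f)) v =
      Mop T (r + 2) f v + q' * Mop T 2 (Mop T (r + 2) f) v := by
    simpa only [Mop_zero] using T.Mop_one_Mop_succ hqp hqm (Mop T (r + 2) f) v 0
  have hM₁M₁' : (q + 1) * Mop T 1 (Mop T 1 (Mop T (r + 2) f)) v =
      Mop T 1 (Mop T (r + 1) f) v + q * Mop T 1 (Mop T (r + 3) f) v := by
    rw [← Mop_const_mul, ← Mop_const_mul, ← Mop_add]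
    refine T.Mop_congr fun u hu ↦ ?_
    have hstep := T.Mop_one_Mop_succ hqp hqm f u (r + 1)
    rwa [T.adj_parity (SimpleGraph.dist_eq_one_iff_adj.1 hu), Bool.not_not] at hstep
  have hinner := T.Mop_one_Mop_succ hqp hqm f v r
  have houter := T.Mop_one_Mop_succ hqp hqm f v (r + 2)
  rw [eq_inv_mul_iff_mul_eq₀ (mul_ne_zero hq1 hq'0)]
  linear_combination (q' + 1) * hM₁M₁' - (q + 1) * hM₁M₁ + hinner + q * houter

theorem stmt_9 {qp qm : ℕ} (hqp : 2 ≤ qp) (hqm : 2 ≤ qm) {V : Type}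
    (T : SemiHomTree qp qm V) (v0 : V) (hv0 : T.eps v0 = true)
    (f : V → ℂ) (v : V) (hv : T.eps v = true) (n : ℕ) (hn : 1 ≤ n) :
    Mop T 2 (fun u => Mop T (2 * n) f u) v =
      (((qp : ℂ) + 1) * (qm : ℂ))⁻¹ *
        (Mop T (2 * n - 2) f v + ((qm : ℂ) - 1) * Mop T (2 * n) f v +
          (qp : ℂ) * (qm : ℂ) * Mop T (2 * n + 2) f v) := by
  obtain ⟨k, rfl⟩ := Nat.exists_eq_add_of_le' hn
  simpa [hv, SemiHomTree.branching, mul_add, add_assoc] using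
    stmt_9_general (by omega) (by omega) T f v (2 * k)
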